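/- Let V be a representation of the Yangian Y(gl_n) with T_{ij}^{(r)} = 0 for all r ≥ 3, and let η ∈ V be a Y(gl_{n−1})-singular vector: T_{ij}(u)η = 0 for 1 ≤ i < j ≤ n−1 and T_{ii}(u)η = ν_i(u)η for i = 1,…,n−1, where each ν_i(u) is a monic polynomial of degree 2. Fix 1 ≤ a ≤ n−1, an integer k ≥ 1 and a complex number v. Then: (i) for 1 ≤ i ≤ n−1 with i ≠ a, T_{ii}(u)·𝒯_{na}(v,k)η = ν_i(u)·𝒯_{na}(v,k)η; (ii) for 1 ≤ i < n−1 with i ≠ a, T_{i,i+1}(u)·𝒯_{na}(v,k)η = 0; (iii) if ρ ∈ ℂ satisfies ν_a(−ρ) = 0, so that ν_a(u) = (u+ρ)q(u) for a polynomial q, then T_{aa}(u)·𝒯_{na}(−ρ,k)η = (u+ρ−k)q(u)·𝒯_{na}(−ρ,k)η, and, if moreover a < n−1, T_{a,a+1}(u)·𝒯_{na}(−ρ,k)η = 0. All identities are between End(V)-valued polynomials in u applied to vectors. -/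

import Mathlib

/-- A representation of the Yangian `Y(gl_n)` on a complex vector space `V`:
a family of operators `T r i j` (`r ≥ 1`), with `T 0 i j = δ_{ij}·id`,
satisfying the defining relations
`[T^{(r+1)}_{ij}, T^{(s)}_{kl}] − [T^{(r)}_{ij}, T^{(s+1)}_{kl}]
  = T^{(r)}_{kj} T^{(s)}_{il} − T^{(s)}_{kj} T^{(r)}_{il}`. -/
def IsYangianRep (n : ℕ) {V : Type*} [AddCommGroup V] [Module ℂ V]
    (T : ℕ → Fin n → Fin n → (V →ₗ[ℂ] V)) : Prop :=
  (∀ i j : Fin n, T 0 i j = if i = j then LinearMap.id else 0) ∧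
  (∀ r s : ℕ, ∀ i j k l : Fin n,
    (T (r + 1) i j ∘ₗ T s k l - T s k l ∘ₗ T (r + 1) i j)
      - (T r i j ∘ₗ T (s + 1) k l - T (s + 1) k l ∘ₗ T r i j)
    = T r k j ∘ₗ T s i l - T s k j ∘ₗ T r i l)

/-- The polynomial operator `T_{ij}(u) = u² δ_{ij}·id + u T^{(1)}_{ij} + T^{(2)}_{ij}`
(in a representation with `T^{(r)} = 0` for `r ≥ 3`). -/
noncomputable def Tpoly {n : ℕ} {V : Type*} [AddCommGroup V] [Module ℂ V]
    (T : ℕ → Fin n → Fin n → (V →ₗ[ℂ] V)) (i j : Fin n) (u : ℂ) : V →ₗ[ℂ] V :=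
  u ^ 2 • (if i = j then (LinearMap.id : V →ₗ[ℂ] V) else 0) + u • T 1 i j + T 2 i j

/-- The polynomial quantum minor `T^{a_1⋯a_l}_{b_1⋯b_l}(u)
= Σ_{σ ∈ S_l} sgn σ · T_{a_{σ(1)} b_1}(u) T_{a_{σ(2)} b_2}(u−1) ⋯
T_{a_{σ(l)} b_l}(u−l+1)`. -/
noncomputable def TqminorPoly {n : ℕ} {V : Type*} [AddCommGroup V] [Module ℂ V]
    (T : ℕ → Fin n → Fin n → (V →ₗ[ℂ] V)) (l : ℕ) (a b : Fin l → Fin n)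
    (u : ℂ) : V →ₗ[ℂ] V :=
  ∑ σ : Equiv.Perm (Fin l),
    (((Equiv.Perm.sign σ : ℤ) : ℂ)) •
      (List.ofFn fun s : Fin l =>
        Tpoly T (a (σ s)) (b s) (u - ((s : ℕ) : ℂ))).foldr (· ∘ₗ ·) LinearMap.id

/-- The sequence of `0`-indexed row (or column) indices `off, off+1, …, off+l-1`. -/
def idxSeq (n off l : ℕ) (h : off + l ≤ n) : Fin l → Fin n :=
  fun s => ⟨off + s.1, by have := s.isLt; omega⟩

/-- The sequence of `0`-indexed indices `off, off+1, …, off+l-2, n-1`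
(the last index replaced by `n-1`). -/
def idxSeqLast (n off l : ℕ) (h : off + l ≤ n) (hn : 1 ≤ n) : Fin l → Fin n :=
  fun s => if s.1 = l - 1 then ⟨n - 1, by omega⟩
    else ⟨off + s.1, by have := s.isLt; omega⟩

/-- The lowering operator `τ_{ra}(v) = T^{a+1⋯r}_{a⋯r−1}(v)`
(`1 ≤ a < r ≤ n`, indices in `1, …, n` as in the paper). -/
noncomputable def tauPoly {n : ℕ} {V : Type*} [AddCommGroup V] [Module ℂ V]
    (T : ℕ → Fin n → Fin n → (V →ₗ[ℂ] V)) (r a : ℕ)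
    (ha : 1 ≤ a) (har : a < r) (hr : r ≤ n) (v : ℂ) : V →ₗ[ℂ] V :=
  TqminorPoly T (r - a) (idxSeq n a (r - a) (by omega))
    (idxSeq n (a - 1) (r - a) (by omega)) v

/-- The product of lowering operators
`𝒯_{ra}(v, k) = τ_{ra}(v+k−1) ⋯ τ_{ra}(v+1) τ_{ra}(v)`
(the identity operator when `k = 0`). -/
noncomputable def TTPoly {n : ℕ} {V : Type*} [AddCommGroup V] [Module ℂ V]
    (T : ℕ → Fin n → Fin n → (V →ₗ[ℂ] V)) (r a : ℕ)
    (ha : 1 ≤ a) (har : a < r) (hr : r ≤ n) (v : ℂ) : ℕ → (V →ₗ[ℂ] V)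
  | 0 => LinearMap.id
  | k + 1 => tauPoly T r a ha har hr (v + (k : ℂ)) ∘ₗ TTPoly T r a ha har hr v k


namespace YM
open Equiv Function Finset

variable {R : Type*} [Ring R] [Algebra ℂ R] {ι : Type*}

/-- Quantum minor in an abstract ring, as a signed sum over permutations. -/
noncomputable def N (T : ι → ι → ℂ → R) (m : ℕ) (A B : Fin m → ι) (v : ℂ) : R :=
  ∑ σ : Perm (Fin m), (((Perm.sign σ : ℤ) : ℂ)) •
    (List.ofFn fun s : Fin m => T (A (σ s)) (B s) (v - ((s : ℕ) : ℂ))).prod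

/-- The defining relation in generating-function form. -/
def Rel (T : ι → ι → ℂ → R) : Prop :=
  ∀ (i j k l : ι) (u v : ℂ),
    (u - v) • (T i j u * T k l v - T k l v * T i j u)
      = T k j u * T i l v - T k j v * T i l u

variable {T : ι → ι → ℂ → R}

/-- Sign of a permutation as a complex number. -/
noncomputable def sg {m : ℕ} (π : Perm (Fin m)) : ℂ := ((Perm.sign π : ℤ) : ℂ)

lemma sg_mul {m : ℕ} (π σ : Perm (Fin m)) : sg (π * σ) = sg π * sg σ := by
  simp [sg]

lemma sg_sq {m : ℕ} (π : Perm (Fin m)) : sg π * sg π = 1 := by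
  rw [← sg_mul]
  rcases Int.units_eq_one_or (Perm.sign π) with h | h <;> simp [sg, h]

lemma sg_swap {m : ℕ} {i j : Fin m} (h : i ≠ j) : sg (swap i j) = -1 := by
  simp [sg, Perm.sign_swap h]

lemma N_row (m : ℕ) (A B : Fin m → ι) (v : ℂ) (π : Perm (Fin m)) :
    N T m (A ∘ π) B v = sg π • N T m A B v := by
  unfold N
  rw [Finset.smul_sum]
  refine Fintype.sum_equiv (Equiv.mulLeft π) _ _ (fun σ => ?_)
  rw [smul_smul]
  change sg σ • _ = (sg π * sg (π * σ)) • _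
  rw [sg_mul, ← mul_assoc, sg_sq, one_mul]
  rfl

lemma eq_zero_of_neg {x : R} (h : x = -x) : x = 0 := by
  have h2 : (2 : ℂ) • x = 0 := by
    rw [two_smul]; nth_rewrite 2 [h]; simp
  exact (smul_eq_zero.mp h2).resolve_left two_ne_zero

lemma comp_swap_self {m : ℕ} {A : Fin m → ι} {i j : Fin m} (h : A i = A j) :
    A ∘ swap i j = A := by
  funext x
  simp only [comp_apply, swap_apply_def]
  split_ifs with h1 h2
  · rw [h1, h]
  · rw [h2, h]
  · rfl

lemma N_row_rep (m : ℕ) (A B : Fin m → ι) (v : ℂ) {i j : Fin m} (hij : i ≠ j)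
    (h : A i = A j) : N T m A B v = 0 := by
  apply eq_zero_of_neg
  conv_lhs => rw [← comp_swap_self h, N_row, sg_swap hij]
  simp

/-- Signed complementary minor, with row `p` removed. -/
noncomputable def nn (T : ι → ι → ℂ → R) (m : ℕ) (p : Fin (m + 1)) (A : Fin (m + 1) → ι)
    (B : Fin m → ι) (v : ℂ) : R :=
  sg (swap 0 p) • N T m (A ∘ swap 0 p ∘ Fin.succ) B v

lemma laplace (m : ℕ) (A B : Fin (m + 1) → ι) (v : ℂ) :
    N T (m + 1) A B v =
      ∑ p, T (A p) (B 0) v * nn T m p A (B ∘ Fin.succ) (v - 1) := by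
  unfold nn N
  rw [← (Perm.decomposeFin (n := m)).symm.sum_comp, Fintype.sum_prod_type]
  refine Finset.sum_congr rfl (fun p _ => ?_)
  rw [Finset.smul_sum, Finset.mul_sum]
  refine Finset.sum_congr rfl (fun e _ => ?_)
  rw [List.ofFn_succ, List.prod_cons, smul_smul, mul_smul_comm]
  congr 1
  · rw [Perm.decomposeFin.symm_sign]
    by_cases hp : p = 0
    · simp [hp, sg]
    · simp [hp, sg, Perm.sign_swap (Ne.symm hp)]
  · congr 1
    · simp
    · congr 2
      funext s
      simp only [Perm.decomposeFin_symm_apply_succ, comp_apply, Fin.val_succ, Nat.cast_add,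
        Nat.cast_one]
      congr 1
      ring

lemma nn_congr (m : ℕ) (p : Fin (m + 1)) (A A' : Fin (m + 1) → ι) (B : Fin m → ι) (v : ℂ)
    (h : ∀ q, q ≠ p → A q = A' q) : nn T m p A B v = nn T m p A' B v := by
  unfold nn
  congr 2
  funext q
  simp only [comp_apply]
  apply h
  intro hq
  have := congrArg (swap 0 p) hq
  simp at this

lemma nn_swap (m : ℕ) (p i : Fin (m + 1)) (hpi : p ≠ i) (A : Fin (m + 1) → ι)
    (B : Fin m → ι) (v : ℂ) : nn T m p (A ∘ swap p i) B v = - nn T m i A B v := by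
  unfold nn
  rcases Fin.eq_zero_or_eq_succ p with rfl | ⟨p', rfl⟩
  · rw [sg_swap hpi]
    simp [sg, comp_def]
  · rcases Fin.eq_zero_or_eq_succ i with rfl | ⟨i', rfl⟩
    · rw [sg_swap hpi.symm]
      have : (A ∘ swap p'.succ 0) ∘ swap 0 p'.succ ∘ Fin.succ = A ∘ swap 0 0 ∘ Fin.succ := by
        funext q
        simp [swap_comm p'.succ 0]
      rw [this]; simp [sg]
    · have hpi' : p' ≠ i' := fun h => hpi (by rw [h])
      have : (A ∘ swap p'.succ i'.succ) ∘ swap 0 p'.succ ∘ Fin.succ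
          = (A ∘ swap 0 i'.succ ∘ Fin.succ) ∘ swap p' i' := by
        funext q
        simp only [comp_apply]
        congr 1
        have hs : (swap p' i' q).succ = swap p'.succ i'.succ q.succ := by
          simp only [swap_apply_def, Fin.succ_inj]; split_ifs <;> rfl
        rw [hs]
        have h0 : swap p'.succ i'.succ 0 = 0 :=
          swap_apply_of_ne_of_ne (Fin.succ_ne_zero _).symm (Fin.succ_ne_zero _).symm
        have := swap_mul_eq_mul_swap (swap p'.succ i'.succ) 0 i'.succ
        rw [swap_inv, h0, swap_apply_right] at this
        rw [← Perm.mul_apply, ← Perm.mul_apply, this]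
      rw [this, N_row, sg_swap hpi', sg_swap (Fin.succ_ne_zero _).symm,
        sg_swap (Fin.succ_ne_zero _).symm]
      simp

lemma nn_update (m : ℕ) (p i : Fin (m + 1)) (hpi : p ≠ i) (A : Fin (m + 1) → ι) (k : ι)
    (B : Fin m → ι) (v : ℂ) :
    nn T m p (update A i k) B v = - nn T m i (update A p k) B v := by
  rw [← nn_swap m p i hpi]
  apply nn_congr
  intro q hq
  by_cases hqi : q = i
  · subst hqi; simp
  · simp [swap_apply_of_ne_of_ne hq hqi, hq, hqi]

lemma two_by_two (hR : Rel T) (i j k l : ι) (u : ℂ) :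
    T i j u * T k l (u - 1) - T k j u * T i l (u - 1)
      + (T i l u * T k j (u - 1) - T k l u * T i j (u - 1)) = 0 := by
  have h1 := hR i j k l u (u - 1)
  have h2 := hR i l k j u (u - 1)
  simp only [sub_sub_cancel, one_smul] at h1 h2
  rw [sub_eq_sub_iff_sub_eq_sub] at h1 h2
  rw [h1, h2]
  abel

lemma N_col01 (hR : Rel T) (m : ℕ) (A B : Fin (m + 2) → ι) (v : ℂ) :
    N T (m + 2) A (B ∘ swap 0 1) v = - N T (m + 2) A B v := by
  rw [eq_neg_iff_add_eq_zero]
  unfold N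
  rw [← Finset.sum_add_distrib]
  set g : Perm (Fin (m + 2)) → R := fun σ =>
    sg σ • (List.ofFn fun s : Fin (m+2) =>
      T (A (σ s)) ((B ∘ swap 0 1) s) (v - ((s : ℕ) : ℂ))).prod +
    sg σ • (List.ofFn fun s : Fin (m+2) => T (A (σ s)) (B s) (v - ((s : ℕ) : ℂ))).prod with hg
  change ∑ σ, g σ = 0
  apply eq_zero_of_neg
  rw [← Finset.sum_neg_distrib]
  refine Fintype.sum_equiv (Equiv.mulRight (swap 0 1)) _ _ (fun σ => ?_)
  rw [eq_neg_iff_add_eq_zero]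
  have h01 : (0 : Fin (m + 2)) ≠ 1 := by simp
  have hss : ∀ s : Fin m, swap (0 : Fin (m+2)) 1 s.succ.succ = s.succ.succ := fun s =>
    swap_apply_of_ne_of_ne (Fin.succ_ne_zero _)
      (by rw [← Fin.succ_zero_eq_one]; exact fun h => Fin.succ_ne_zero _ (Fin.succ_injective _ h))
  simp only [hg, Equiv.coe_mulRight, sg_mul, sg_swap h01, List.ofFn_succ, List.prod_cons,
    comp_apply, Perm.mul_apply, hss, Fin.succ_zero_eq_one, swap_apply_left, swap_apply_right,
    Fin.val_zero, Fin.val_one, Nat.cast_zero, Nat.cast_one, sub_zero]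
  have h := two_by_two hR (A (σ 0)) (B 0) (A (σ 1)) (B 1) v
  set X := (List.ofFn fun s : Fin m => T (A (σ s.succ.succ)) (B s.succ.succ)
    (v - ((s.succ.succ : ℕ) : ℂ))).prod
  have h' := congrArg (fun z => sg σ • (z * X)) h
  simp only [zero_mul, smul_zero] at h'
  rw [← h']
  simp only [← mul_assoc, add_mul, sub_mul]
  module

lemma N_col_adj (hR : Rel T) (m : ℕ) : ∀ (A B : Fin (m + 1) → ι) (v : ℂ) (t : Fin m),
    N T (m + 1) A (B ∘ swap t.castSucc t.succ) v = - N T (m + 1) A B v := by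
  induction m with
  | zero => intro _ _ _ t; exact t.elim0
  | succ m ih =>
    intro A B v t
    rcases Fin.eq_zero_or_eq_succ t with rfl | ⟨t', rfl⟩
    · exact N_col01 hR m A B v
    · rw [laplace, laplace, ← Finset.sum_neg_distrib]
      refine Finset.sum_congr rfl (fun p _ => ?_)
      have h0 : (B ∘ swap t'.succ.castSucc t'.succ.succ) 0 = B 0 := by
        rw [comp_apply, swap_apply_of_ne_of_ne]
        · rw [Fin.castSucc_succ]; exact (Fin.succ_ne_zero _).symm
        · exact (Fin.succ_ne_zero _).symm
      have h1 : (B ∘ swap t'.succ.castSucc t'.succ.succ) ∘ Fin.succ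
          = (B ∘ Fin.succ) ∘ swap t'.castSucc t'.succ := by
        funext q
        simp only [comp_apply]
        congr 1
        rw [Fin.castSucc_succ]
        simp only [swap_apply_def, Fin.succ_inj]; split_ifs <;> rfl
      rw [h0, h1]
      unfold nn
      rw [ih]
      simp

lemma N_col (hR : Rel T) (m : ℕ) (A B : Fin m → ι) (v : ℂ) (π : Perm (Fin m)) :
    N T m A (B ∘ π) v = sg π • N T m A B v := by
  cases m with
  | zero => 
    have : π = 1 := Subsingleton.elim _ _
    subst this
    simp [sg]
  | succ m =>
    have hπ : π ∈ Submonoid.closure (Set.range fun i : Fin m => swap i.castSucc i.succ) := by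
      rw [Perm.mclosure_swap_castSucc_succ]; trivial
    induction hπ using Submonoid.closure_induction generalizing B with
    | mem x hx =>
      obtain ⟨t, rfl⟩ := hx
      simp only
      rw [N_col_adj hR, sg_swap (Fin.castSucc_lt_succ).ne]
      simp
    | one => simp [sg]
    | mul x y _ _ hx hy =>
      rw [Perm.coe_mul, ← comp_assoc, hy, hx, sg_mul, smul_smul, mul_comm]

lemma N_col_rep (hR : Rel T) (m : ℕ) (A B : Fin m → ι) (v : ℂ) {i j : Fin m} (hij : i ≠ j)
    (h : B i = B j) : N T m A B v = 0 := by
  apply eq_zero_of_neg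
  conv_lhs => rw [← comp_swap_self h, N_col hR, sg_swap hij]
  simp

lemma sum_erase (m : ℕ) (p : Fin (m + 1)) (f : Fin (m + 1) → R) :
    ∑ i, (if i = p then 0 else f i) = ∑ q : Fin m, f (swap 0 p q.succ) := by
  rw [← Equiv.sum_comp (swap 0 p), Fin.sum_univ_succ]
  simp only [swap_apply_left, if_true, zero_add]
  refine Finset.sum_congr rfl (fun q _ => ?_)
  rw [if_neg]
  intro hq
  have := congrArg (swap 0 p) hq
  simp at this

/-- The commutation statement at size `m`. -/
def Comm (T : ι → ι → ℂ → R) (m : ℕ) : Prop :=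
  ∀ (A B : Fin m → ι) (u v : ℂ) (k l : ι), (∀ s : ℕ, u - v + s + 1 ≠ 0) →
    (u - v) • (T k l u * N T m A B v - N T m A B v * T k l u)
      = ∑ i, T (A i) l u * N T m (update A i k) B v
        - ∑ j, N T m A (update B j l) v * T k (B j) u

lemma nn_comm (m : ℕ) (h : Comm T m) (p : Fin (m + 1)) (A : Fin (m + 1) → ι) (B : Fin m → ι)
    (u v : ℂ) (k l : ι) (hs : ∀ s : ℕ, u - v + s + 1 ≠ 0) :
    (u - v + 1) • (T k l u * nn T m p A B (v - 1) - nn T m p A B (v - 1) * T k l u)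
      = ∑ i, T (A i) l u * (if i = p then 0 else nn T m p (update A i k) B (v - 1))
        - ∑ j, nn T m p A (update B j l) (v - 1) * T k (B j) u := by
  have h1 := h (A ∘ swap 0 p ∘ Fin.succ) B u (v - 1) k l (by
    intro s
    have := hs (s + 1)
    push_cast at this
    intro h; apply this; rw [← h]; ring)
  have e : u - (v - 1) = u - v + 1 := by ring
  rw [e] at h1
  simp only [mul_ite, mul_zero]
  rw [sum_erase]
  unfold nn
  simp only [mul_smul_comm, smul_mul_assoc, ← Finset.smul_sum, ← smul_sub]
  rw [smul_comm, h1]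
  congr 2
  refine Finset.sum_congr rfl (fun q _ => ?_)
  simp only [comp_apply]
  congr 2
  funext r
  simp only [comp_apply, update_apply, EmbeddingLike.apply_eq_iff_eq, Fin.succ_inj]

lemma comm (hR : Rel T) (m : ℕ) : Comm T m := by
  induction m with
  | zero =>
    intro A B u v k l hs
    simp [N]
  | succ m ih =>
    intro A B u v k l hs
    have hx1 : u - v + 1 ≠ 0 := by simpa using hs 0
    set x := u - v with hx
    set n0 : Fin (m + 1) → R := fun p => nn T m p A (B ∘ Fin.succ) (v - 1) with hn0
    set n1 : Fin (m + 1) → Fin (m + 1) → R := fun p i =>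
      if i = p then 0 else nn T m p (update A i k) (B ∘ Fin.succ) (v - 1) with hn1
    set n2 : Fin (m + 1) → Fin m → ι → R := fun p j b =>
      nn T m p A (update (B ∘ Fin.succ) j b) (v - 1) with hn2
    set S1 := ∑ p, T (A p) l u * T k (B 0) v * n0 p with hS1
    set S2 := ∑ p, T (A p) l v * T k (B 0) u * n0 p with hS2
    set S3 := ∑ p, ∑ i, T (A p) (B 0) v * T (A i) l u * n1 p i with hS3
    set S4 := ∑ p, ∑ j, T (A p) (B 0) v * n2 p j l * T k (B (Fin.succ j)) u with hS4
    set S5 := ∑ p, ∑ i, T (A i) l u * T (A p) (B 0) v * n1 p i with hS5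
    set S6 := ∑ p, T (A p) l v * n0 p * T k (B 0) u with hS6
    set S7 := ∑ p, ∑ i, T (A p) l v * T (A i) (B 0) u * n1 p i with hS7
    set S8 := ∑ p, ∑ i, T (A p) l u * T (A i) (B 0) v * n1 p i with hS8
    set S9 := ∑ p, ∑ j, T (A p) l v * n2 p j (B 0) * T k (B (Fin.succ j)) u with hS9
    have key : ∀ l' p, (x + 1) • (T k l' u * n0 p - n0 p * T k l' u)
        = ∑ i, T (A i) l' u * n1 p i - ∑ j, n2 p j l' * T k (B (Fin.succ j)) u :=
      fun l' p => nn_comm m ih p A (B ∘ Fin.succ) u v k l' hs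
    have F1 : (x + 1) • x • (T k l u * N T (m + 1) A B v - N T (m + 1) A B v * T k l u)
        = (x + 1) • (S1 - S2) + x • (S3 - S4) := by
      rw [laplace, Finset.mul_sum, Finset.sum_mul, ← Finset.sum_sub_distrib, hS1, hS2, hS3, hS4,
        ← Finset.sum_sub_distrib, ← Finset.sum_sub_distrib]
      simp only [Finset.smul_sum]
      rw [← Finset.sum_add_distrib]
      refine Finset.sum_congr rfl (fun p _ => ?_)
      have h1 := congrArg (fun z => (x + 1) • (z * n0 p)) (hR k l (A p) (B 0) u v)
      have h2 := congrArg (fun z => x • (T (A p) (B 0) v * z)) (key l p)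
      simp only [mul_sub, sub_mul, smul_mul_assoc, mul_smul_comm, Finset.mul_sum,
        ← mul_assoc] at h1 h2 ⊢
      rw [← h1, ← h2]
      change _ = _ at h1
      rw [← hx]
      module
    have F2 : ∑ i, T (A i) l u * N T (m + 1) (update A i k) B v = S1 + S5 := by
      rw [hS5, Finset.sum_comm, hS1, ← Finset.sum_add_distrib]
      refine Finset.sum_congr rfl (fun i _ => ?_)
      rw [laplace, ← Finset.add_sum_erase _ _ (Finset.mem_univ i),
        ← Finset.add_sum_erase (s := Finset.univ) (a := i) (fun p => T (A i) l u * _ * n1 p i)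
          (Finset.mem_univ i)]
      simp only [hn1, if_true, mul_zero, zero_add, mul_add, Finset.mul_sum, update_self,
        ← mul_assoc]
      congr 1
      · congr 1
        apply nn_congr
        intro q hq
        simp [hq]
      · refine Finset.sum_congr rfl (fun p hp => ?_)
        have hp' : p ≠ i := by simpa using hp
        rw [if_neg hp'.symm, update_of_ne hp']
    have F3 : ∑ j, N T (m + 1) A (update B j l) v * T k (B j) u = S6 + S4 := by
      rw [Fin.sum_univ_succ, hS4, Finset.sum_comm, hS6]
      simp only [laplace, Finset.sum_mul]
      congr 1
      refine Finset.sum_congr rfl (fun j _ => ?_)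
      refine Finset.sum_congr rfl (fun p _ => ?_)
      have : update B j.succ l ∘ Fin.succ = update (B ∘ Fin.succ) j l := by
        funext q; simp [update_apply, Fin.succ_inj]
      rw [this, update_of_ne (Fin.succ_ne_zero _).symm]
    have F4 : x • (S5 - S3) = S8 - S7 := by
      rw [hS5, hS3, hS8, hS7]
      simp only [← Finset.sum_sub_distrib, Finset.smul_sum, ← sub_mul]
      refine Finset.sum_congr rfl (fun p _ => Finset.sum_congr rfl (fun i _ => ?_))
      rw [← hR, smul_mul_assoc]
    have F5 : S8 = - S5 := by
      rw [hS8, hS5, Finset.sum_comm, ← Finset.sum_neg_distrib]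
      refine Finset.sum_congr rfl (fun i _ => ?_)
      rw [← Finset.sum_neg_distrib]
      refine Finset.sum_congr rfl (fun p _ => ?_)
      rw [← mul_neg]
      congr 1
      simp only [hn1]
      by_cases hpi : p = i
      · simp [hpi]
      · rw [if_neg hpi, if_neg (Ne.symm hpi), nn_update _ _ _ hpi]
    have F6 : (x + 1) • (S2 - S6) = S7 - S9 := by
      rw [hS2, hS6, hS7, hS9]
      simp only [← Finset.sum_sub_distrib, Finset.smul_sum]
      refine Finset.sum_congr rfl (fun p _ => ?_)
      have h2 := congrArg (fun z => (T (A p) l v * z)) (key (B 0) p)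
      simp only [mul_sub, mul_smul_comm, Finset.mul_sum, ← mul_assoc] at h2
      rw [← h2]
    have F7 : S9 + S4 = 0 := by
      rw [hS9, hS4, Finset.sum_comm]
      conv_lhs => arg 2; rw [Finset.sum_comm]
      rw [← Finset.sum_add_distrib]
      refine Finset.sum_eq_zero (fun j _ => ?_)
      rw [← Finset.sum_mul, ← Finset.sum_mul, ← add_mul]
      have hsw := N_col hR (m + 1) A (update B j.succ l) v (swap 0 j.succ)
      rw [sg_swap (Fin.succ_ne_zero _).symm, neg_one_smul, eq_neg_iff_add_eq_zero, laplace,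
        laplace] at hsw
      have e1 : update B j.succ l ∘ Fin.succ = update (B ∘ Fin.succ) j l := by
        funext q; simp [update_apply, Fin.succ_inj]
      have e2 : (update B j.succ l ∘ swap 0 j.succ) ∘ Fin.succ
          = update (B ∘ Fin.succ) j (B 0) := by
        funext q
        by_cases hq : q = j
        · subst hq; simp [update_apply, (Fin.succ_ne_zero _).symm]
        · have : q.succ ≠ j.succ := fun h => hq (Fin.succ_injective _ h)
          simp [swap_apply_of_ne_of_ne (Fin.succ_ne_zero q) this, hq]
      rw [e1, e2, comp_apply, swap_apply_left, update_self,
        update_of_ne (Fin.succ_ne_zero _).symm] at hsw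
      rw [hsw, zero_mul]
    rw [F2, F3]
    have hinj : ∀ y z : R, (x + 1) • y = (x + 1) • z → y = z := fun y z h =>
      smul_right_injective R hx1 h
    apply hinj
    rw [F1]
    rw [F5] at F4
    have F7' : S4 = - S9 := by rw [eq_neg_iff_add_eq_zero, add_comm]; exact F7
    rw [F7']
    linear_combination (norm := module) (-1 : ℂ) • F4 - F6

lemma row_expand (hR : Rel T) (m : ℕ) (A B : Fin (m + 1) → ι) (v : ℂ) :
    N T (m + 1) A B v = N T m (A ∘ Fin.succ) (B ∘ Fin.succ) (v - 1) * T (A 0) (B 0) v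
      - ∑ j, N T m (A ∘ Fin.succ) (update (B ∘ Fin.succ) j (B 0)) (v - 1)
          * T (A 0) (B (Fin.succ j)) v := by
  have h := comm hR m (A ∘ Fin.succ) (B ∘ Fin.succ) v (v - 1) (A 0) (B 0) (by
    intro s
    have : v - (v - 1) + (s : ℂ) + 1 = ((s + 2 : ℕ) : ℂ) := by push_cast; ring
    rw [this]
    exact Nat.cast_ne_zero.mpr (by omega))
  rw [sub_sub_cancel, one_smul, sub_eq_sub_iff_sub_eq_sub] at h
  simp only [comp_apply] at h
  rw [laplace, Fin.sum_univ_succ]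
  have h0 : nn T m 0 A (B ∘ Fin.succ) (v - 1)
      = N T m (A ∘ Fin.succ) (B ∘ Fin.succ) (v - 1) := by
    simp [nn, sg]
  have h1 : ∀ i : Fin m, nn T m i.succ A (B ∘ Fin.succ) (v - 1)
      = - N T m (update (A ∘ Fin.succ) i (A 0)) (B ∘ Fin.succ) (v - 1) := by
    intro i
    unfold nn
    rw [sg_swap (Fin.succ_ne_zero _).symm, neg_one_smul]
    congr 2
    funext q
    by_cases hq : q = i
    · subst hq; simp
    · have : q.succ ≠ i.succ := fun h => hq (Fin.succ_injective _ h)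
      simp [swap_apply_of_ne_of_ne (Fin.succ_ne_zero q) this, hq]
  simp only [h0, h1, mul_neg, Finset.sum_neg_distrib, ← sub_eq_add_neg]
  exact h

lemma row_in (m : ℕ) (A B : Fin m → ι) (u v : ℂ) (l : ι) (p : Fin m) :
    ∑ i, T (A i) l u * N T m (update A i (A p)) B v = T (A p) l u * N T m A B v := by
  rw [Finset.sum_eq_single p]
  · simp
  · intro i _ hi
    rw [N_row_rep (i := i) (j := p) _ _ _ _ hi, mul_zero]
    simp [update_apply, hi.symm]
  · simp

lemma col_in (hR : Rel T) (m : ℕ) (A B : Fin m → ι) (u v : ℂ) (k : ι)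
    (p : Fin m) :
    ∑ j, N T m A (update B j (B p)) v * T k (B j) u = N T m A B v * T k (B p) u := by
  rw [Finset.sum_eq_single p]
  · simp
  · intro i _ hi
    rw [N_col_rep hR (i := i) (j := p) _ _ _ _ hi, zero_mul]
    simp [update_apply, hi.symm]
  · simp

end YM

lemma Tpoly_rel {n : ℕ} {V : Type*} [AddCommGroup V] [Module ℂ V]
    (T : ℕ → Fin n → Fin n → (V →ₗ[ℂ] V)) (hT : IsYangianRep n T)
    (hvan : ∀ r : ℕ, 3 ≤ r → ∀ i j : Fin n, T r i j = 0) (i j k l : Fin n) (u v : ℂ) :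
    (u - v) • ((Tpoly T i j u : Module.End ℂ V) * Tpoly T k l v - (Tpoly T k l v : Module.End ℂ V) * Tpoly T i j u)
      = (Tpoly T k j u : Module.End ℂ V) * Tpoly T i l v - (Tpoly T k j v : Module.End ℂ V) * Tpoly T i l u := by
  obtain ⟨h0, hr⟩ := hT
  obtain ⟨c, hc⟩ : ∃ c : Fin n → Fin n → ℂ, ∀ i j, (T 0 i j : Module.End ℂ V) = c i j • 1 := by
    refine ⟨fun i j => if i = j then 1 else 0, fun i j => ?_⟩
    rw [h0]
    by_cases hij : i = j
    · simp only [if_pos hij, one_smul]; rfl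
    · simp only [if_neg hij, zero_smul]
  have h3 : ∀ i j, T 3 i j = 0 := hvan 3 le_rfl
  have key : ∀ r s : ℕ, ((T (r + 1) i j : Module.End ℂ V) * T s k l - T s k l * T (r + 1) i j)
      - (T r i j * T (s + 1) k l - T (s + 1) k l * T r i j)
    = T r k j * T s i l - T s k j * T r i l := fun r s => hr r s i j k l
  have e00 := key 0 0
  have e01 := key 0 1
  have e02 := key 0 2
  have e10 := key 1 0
  have e11 := key 1 1
  have e12 := key 1 2
  have e20 := key 2 0
  have e21 := key 2 1
  have e22 := key 2 2
  norm_num only [h3] at e00 e01 e02 e10 e11 e12 e20 e21 e22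
  have hp : ∀ i j u, Tpoly T i j u = u ^ 2 • T 0 i j + u • T 1 i j + T 2 i j := by
    intro i j u; rw [h0]; rfl
  simp only [hp, hc, mul_add, add_mul, smul_mul_assoc, mul_smul_comm]
  simp only [mul_zero, zero_mul, hc, smul_mul_assoc, mul_smul_comm, one_mul, mul_one] at e00 e01 e02 e10 e11 e12 e20 e21 e22 ⊢
  linear_combination (norm := module) (u^2*v^2) • e00 + (u^2*v) • e01 + (u^2) • e02 + (u*v^2) • e10
    + (u*v) • e11 + u • e12 + (v^2) • e20 + v • e21 + e22

namespace YM
open Equiv Function Finset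

lemma minor_eq {n : ℕ} {V : Type*} [AddCommGroup V] [Module ℂ V]
    (T : ℕ → Fin n → Fin n → (V →ₗ[ℂ] V)) (l : ℕ) (a b : Fin l → Fin n) (u : ℂ) :
    TqminorPoly T l a b u = N (R := Module.End ℂ V) (Tpoly T) l a b u := rfl

variable {V : Type*} [AddCommGroup V] [Module ℂ V] {ι : Type*}
  {T : ι → ι → ℂ → Module.End ℂ V}

lemma row_kill (hR : Rel T) (m : ℕ) (A B : Fin m → ι) (v : ℂ) (p : Fin m) (ζ : V)
    (h : ∀ j, T (A p) (B j) v ζ = 0) : N T m A B v ζ = 0 := by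
  cases m with
  | zero => exact p.elim0
  | succ m =>
    have h1 : N T (m + 1) (A ∘ swap 0 p) B v ζ = 0 := by
      rw [row_expand hR]
      simp [h]
    rw [N_row] at h1
    have h2 : sg (swap 0 p) ≠ 0 := fun h0 => by
      have := sg_sq (swap 0 p); rw [h0] at this; simp at this
    exact (smul_eq_zero.mp h1).resolve_left h2

/-- The commutation formula with first sum killed. -/
lemma comm_kill (hR : Rel T) (m : ℕ) (A B : Fin m → ι) (u v : ℂ) (k l : ι)
    (hs : ∀ s : ℕ, u - v + s + 1 ≠ 0) (ζ : V) (h : ∀ j, T k (B j) v ζ = 0) :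
    (u - v) • (T k l u (N T m A B v ζ) - N T m A B v (T k l u ζ))
      = - ∑ j, N T m A (update B j l) v (T k (B j) u ζ) := by
  have h1 := LinearMap.congr_fun (comm hR m A B u v k l hs) ζ
  simp only [LinearMap.smul_apply, LinearMap.sub_apply, Module.End.mul_apply,
    LinearMap.sum_apply] at h1
  rw [h1]
  have : ∀ i, N T m (update A i k) B v ζ = 0 := fun i =>
    row_kill hR m _ B v i ζ (by simpa using h)
  simp [this]

lemma quad_ext (c0 c1 c2 : V) (v : ℂ)
    (h : ∀ u : ℂ, (∀ s : ℕ, u - v + s + 1 ≠ 0) → u - v ≠ 0 → u - v ≠ 1 →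
      u ^ 2 • c0 + u • c1 + c2 = 0) (u : ℂ) : u ^ 2 • c0 + u • c1 + c2 = 0 := by
  have hh : ∀ t : ℕ, 2 ≤ t → (v + t) ^ 2 • c0 + (v + t) • c1 + c2 = 0 := by
    intro t ht
    apply h
    · intro s
      have : v + (t : ℂ) - v + s + 1 = ((t + s + 1 : ℕ) : ℂ) := by push_cast; ring
      rw [this]; exact Nat.cast_ne_zero.mpr (by omega)
    · rw [add_sub_cancel_left]; exact Nat.cast_ne_zero.mpr (by omega)
    · rw [add_sub_cancel_left]; intro h1
      have : t = 1 := by exact_mod_cast h1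
      omega
  have h2 := hh 2 le_rfl
  have h3 := hh 3 (by norm_num)
  have h4 := hh 4 (by norm_num)
  push_cast at h2 h3 h4
  linear_combination (norm := module) ((u - v - 3) * (u - v - 4) / 2) • h2
    - ((u - v - 2) * (u - v - 4)) • h3 + ((u - v - 2) * (u - v - 3) / 2) • h4

end YM

namespace YM
open Equiv Function Finset
variable {V : Type*} [AddCommGroup V] [Module ℂ V] {n : ℕ}

lemma Tpoly_ext (T : ℕ → Fin n → Fin n → (V →ₗ[ℂ] V)) (i j : Fin n) (ζ : V) (p : Polynomial ℂ)
    (hp : p.natDegree ≤ 2) (v : ℂ)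
    (h : ∀ u : ℂ, (∀ s : ℕ, u - v + s + 1 ≠ 0) → u - v ≠ 0 → u - v ≠ 1 →
      Tpoly T i j u ζ = p.eval u • ζ) (u : ℂ) : Tpoly T i j u ζ = p.eval u • ζ := by
  have e : ∀ u, Tpoly T i j u ζ - p.eval u • ζ =
      u ^ 2 • ((if i = j then (LinearMap.id : V →ₗ[ℂ] V) else 0) ζ - p.coeff 2 • ζ)
        + u • (T 1 i j ζ - p.coeff 1 • ζ) + (T 2 i j ζ - p.coeff 0 • ζ) := by
    intro u
    rw [Polynomial.eval_eq_sum_range' (n := 3) (by omega)]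
    simp only [Finset.sum_range_succ, Finset.sum_range_zero, Tpoly, LinearMap.add_apply,
      LinearMap.smul_apply]
    module
  rw [← sub_eq_zero, e]
  apply quad_ext _ _ _ v
  intro u h1 h2 h3
  rw [← e, h u h1 h2 h3, sub_self]

lemma N_step_weak (T : ℕ → Fin n → Fin n → (V →ₗ[ℂ] V))
    (hR : Rel (R := Module.End ℂ V) (Tpoly T))
    (m : ℕ) (A B : Fin m → Fin n) (a : ℕ) (ha : 1 ≤ a) (hm : a + m = n)
    (hA : ∀ s, (A s : ℕ) = a + s) (hB : ∀ s, (B s : ℕ) = a - 1 + s) (v : ℂ) (ζ : V)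
    (P : Fin n → Fin n → Polynomial ℂ) (hP : ∀ k l, k < l → P k l = 0)
    (hPd : ∀ k l : Fin n, (l : ℕ) < n - 1 → (P k l).natDegree ≤ 2)
    (hζ : ∀ (u : ℂ) (k l : Fin n), k ≤ l → (l : ℕ) < n - 1 → (k : ℕ) ≠ a - 1 →
      Tpoly T k l u ζ = (P k l).eval u • ζ) :
    ∀ (u : ℂ) (k l : Fin n), k ≤ l → (l : ℕ) < n - 1 → (k : ℕ) ≠ a - 1 →
      Tpoly T k l u (N (R := Module.End ℂ V) (Tpoly T) m A B v ζ)
        = (P k l).eval u • N (R := Module.End ℂ V) (Tpoly T) m A B v ζ := by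
  intro u k l hkl hl hk
  have hcol : ∀ b : Fin n, a - 1 ≤ (b : ℕ) → (b : ℕ) < n - 1 → ∃ s, B s = b := by
    intro b h1 h2
    refine ⟨⟨b - (a - 1), by omega⟩, Fin.ext ?_⟩
    rw [hB]; simp only; omega
  have hrow : ∀ b : Fin n, a ≤ (b : ℕ) → ∃ s, A s = b := by
    intro b h1
    refine ⟨⟨b - a, by omega⟩, Fin.ext ?_⟩
    rw [hA]; simp only; omega
  have hBlt : ∀ s, (B s : ℕ) < n - 1 := by
    intro s; have := hB s; have := s.isLt; omega
  have hkl' : (k : ℕ) ≤ l := hkl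
  refine Tpoly_ext T k l _ _ (hPd k l hl) v ?_ u
  intro u hs h0 h1
  have hz := hζ u k l hkl hl hk
  rcases Nat.lt_or_ge k a with hka | hka
  · -- k < a - 1
    have hkill : ∀ w j, Tpoly T k (B j) w ζ = 0 := by
      intro w j
      have hlt : k < B j := by rw [Fin.lt_def, hB]; omega
      rw [hζ w k (B j) hlt.le (hBlt j) hk, hP _ _ hlt]; simp
    have h := comm_kill hR m A B u v k l hs ζ (hkill v)
    simp only [hkill, map_zero, Finset.sum_const_zero, neg_zero] at h
    have h' := (smul_eq_zero.mp h).resolve_left h0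
    rw [sub_eq_zero] at h'
    rw [h', hz, map_smul]
  · obtain ⟨p, rfl⟩ := hrow k hka
    obtain ⟨q, rfl⟩ := hcol l (by omega) hl
    have h := comm hR m A B u v (A p) (B q) hs
    rw [row_in, col_in hR] at h
    have h2 : (u - v - 1) • ((Tpoly T (A p) (B q) u : Module.End ℂ V) * N (Tpoly T) m A B v
        - N (R := Module.End ℂ V) (Tpoly T) m A B v * Tpoly T (A p) (B q) u) = 0 := by
      rw [sub_smul, h, one_smul, sub_self]
    have h3 := (smul_eq_zero.mp h2).resolve_left (sub_ne_zero.mpr h1)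
    have h4 := LinearMap.congr_fun (sub_eq_zero.mp h3) ζ
    simp only [Module.End.mul_apply] at h4
    rw [h4, hz, map_smul]

lemma N_step_strong (T : ℕ → Fin n → Fin n → (V →ₗ[ℂ] V))
    (hR : Rel (R := Module.End ℂ V) (Tpoly T))
    (m : ℕ) (A B : Fin m → Fin n) (a : ℕ) (ha : 1 ≤ a) (hm : a + m = n)
    (hB : ∀ s, (B s : ℕ) = a - 1 + s) (v : ℂ) (ζ : V)
    (k : Fin n) (hk : (k : ℕ) = a - 1) (q : Polynomial ℂ) (hq : q.natDegree ≤ 1)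
    (hζ : ∀ (u : ℂ) (l : Fin n), k < l → (l : ℕ) < n - 1 → Tpoly T k l u ζ = 0)
    (hζ' : ∀ u, Tpoly T k k u ζ = ((u - v) * q.eval u) • ζ) :
    (∀ (u : ℂ) (l : Fin n), k < l → (l : ℕ) < n - 1 →
      Tpoly T k l u (N (R := Module.End ℂ V) (Tpoly T) m A B v ζ) = 0) ∧
    (∀ u, (k : ℕ) < n - 1 → Tpoly T k k u (N (R := Module.End ℂ V) (Tpoly T) m A B v ζ)
      = ((u - (v + 1)) * q.eval u) • N (R := Module.End ℂ V) (Tpoly T) m A B v ζ) := by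
  have hcol : ∀ b : Fin n, a - 1 ≤ (b : ℕ) → (b : ℕ) < n - 1 → ∃ s, B s = b := by
    intro b h1 h2
    refine ⟨⟨b - (a - 1), by omega⟩, Fin.ext ?_⟩
    rw [hB]; simp only; omega
  have hBlt : ∀ s, (B s : ℕ) < n - 1 := by
    intro s; have := hB s; have := s.isLt; omega
  have hkill : ∀ j, Tpoly T k (B j) v ζ = 0 := by
    intro j
    by_cases hj : k = B j
    · rw [← hj, hζ']; simp
    · apply hζ _ _ _ (hBlt j)
      refine lt_of_le_of_ne ?_ hj
      rw [Fin.le_def, hB]; omega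
  have main : ∀ (u : ℂ) (l : Fin n), k ≤ l → (l : ℕ) < n - 1 → (∀ s : ℕ, u - v + s + 1 ≠ 0) →
      (u - v) • Tpoly T k l u (N (R := Module.End ℂ V) (Tpoly T) m A B v ζ)
        = (u - v - 1) • N (R := Module.End ℂ V) (Tpoly T) m A B v (Tpoly T k l u ζ) := by
    intro u l hkl hl hs
    have hkl' : (k : ℕ) ≤ l := hkl
    have h := comm_kill hR m A B u v k l hs ζ hkill
    obtain ⟨p, rfl⟩ := hcol l (by omega) hl
    have h2 := LinearMap.congr_fun (col_in hR m A B u v k p) ζ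
    simp only [Module.End.mul_apply, LinearMap.sum_apply] at h2
    rw [h2] at h
    linear_combination (norm := module) h
  constructor
  · intro u l hkl hl
    have := Tpoly_ext T k l (N (R := Module.End ℂ V) (Tpoly T) m A B v ζ) 0 (by simp) v (by
      intro u hs h0 _
      have h := main u l hkl.le hl hs
      rw [hζ _ _ hkl hl, map_zero, smul_zero] at h
      simpa using (smul_eq_zero.mp h).resolve_left h0) u
    simpa using this
  · intro u hkn
    have := Tpoly_ext T k k (N (R := Module.End ℂ V) (Tpoly T) m A B v ζ)
      ((Polynomial.X - Polynomial.C (v + 1)) * q) (by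
        refine Polynomial.natDegree_mul_le.trans ?_
        rw [Polynomial.natDegree_X_sub_C]; omega) v (by
      intro u hs h0 _
      have h := main u k le_rfl hkn hs
      rw [hζ', map_smul] at h
      apply smul_right_injective V h0
      simp only
      rw [h, smul_smul, smul_smul]
      congr 1
      simp only [Polynomial.eval_mul, Polynomial.eval_sub, Polynomial.eval_X, Polynomial.eval_C]
      ring) u
    simpa using this

end YM

/-- Let `η` be a `Y(gl_{n−1})`-singular vector:
`T_{ij}(u)η = 0` for `1 ≤ i < j ≤ n−1` and `T_{ii}(u)η = ν_i(u)η` for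
`i = 1, …, n−1`, with `ν_i` monic of degree `2`.  Fix `1 ≤ a ≤ n−1`, `k ≥ 1`
and `v ∈ ℂ` (indices `a`, `i` as in the paper, running over `1, …, n`).  Then:
(i) for `1 ≤ i ≤ n−1`, `i ≠ a`: `T_{ii}(u) 𝒯_{na}(v,k)η = ν_i(u) 𝒯_{na}(v,k)η`;
(ii) for `1 ≤ i < n−1`, `i ≠ a`: `T_{i,i+1}(u) 𝒯_{na}(v,k)η = 0`;
(iii) if `ν_a(−ρ) = 0`, so that `ν_a(u) = (u+ρ)q(u)`, then
`T_{aa}(u) 𝒯_{na}(−ρ,k)η = (u+ρ−k)q(u) 𝒯_{na}(−ρ,k)η` and, if `a < n−1`,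
`T_{a,a+1}(u) 𝒯_{na}(−ρ,k)η = 0`. -/
theorem lowering_operator_action_on_singular
    (n : ℕ) {V : Type*} [AddCommGroup V] [Module ℂ V]
    (T : ℕ → Fin n → Fin n → (V →ₗ[ℂ] V)) (hT : IsYangianRep n T)
    (hvan : ∀ r : ℕ, 3 ≤ r → ∀ i j : Fin n, T r i j = 0)
    (ν : Fin n → Polynomial ℂ)
    (hmonic : ∀ i : Fin n, (i : ℕ) < n - 1 → (ν i).Monic)
    (hdeg : ∀ i : Fin n, (i : ℕ) < n - 1 → (ν i).natDegree = 2)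
    (η : V)
    (hsing : ∀ u : ℂ, ∀ i j : Fin n, i < j → (j : ℕ) < n - 1 → Tpoly T i j u η = 0)
    (hdiagν : ∀ u : ℂ, ∀ i : Fin n, (i : ℕ) < n - 1 →
      Tpoly T i i u η = ((ν i).eval u) • η)
    (a : ℕ) (ha1 : 1 ≤ a) (ha2 : a ≤ n - 1) (k : ℕ) (hk : 1 ≤ k) (v : ℂ) :
    (∀ i : ℕ, ∀ hi1 : 1 ≤ i, ∀ hi2 : i ≤ n - 1, i ≠ a → ∀ u : ℂ,
      Tpoly T ⟨i - 1, by omega⟩ ⟨i - 1, by omega⟩ u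
          (TTPoly T n a ha1 (by omega) (by omega) v k η)
        = ((ν ⟨i - 1, by omega⟩).eval u) •
            TTPoly T n a ha1 (by omega) (by omega) v k η) ∧
    (∀ i : ℕ, ∀ hi1 : 1 ≤ i, ∀ hi2 : i < n - 1, i ≠ a → ∀ u : ℂ,
      Tpoly T ⟨i - 1, by omega⟩ ⟨i, by omega⟩ u
        (TTPoly T n a ha1 (by omega) (by omega) v k η) = 0) ∧
    (∀ ρ : ℂ, ∀ q : Polynomial ℂ,
      (ν ⟨a - 1, by omega⟩).eval (-ρ) = 0 →
      ν ⟨a - 1, by omega⟩ = (Polynomial.X + Polynomial.C ρ) * q →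
      (∀ u : ℂ,
        Tpoly T ⟨a - 1, by omega⟩ ⟨a - 1, by omega⟩ u
            (TTPoly T n a ha1 (by omega) (by omega) (-ρ) k η)
          = ((u + ρ - (k : ℂ)) * q.eval u) •
              TTPoly T n a ha1 (by omega) (by omega) (-ρ) k η) ∧
      (∀ ha3 : a < n - 1, ∀ u : ℂ,
        Tpoly T ⟨a - 1, by omega⟩ ⟨a, by omega⟩ u
          (TTPoly T n a ha1 (by omega) (by omega) (-ρ) k η) = 0)) := by
  have hR : YM.Rel (R := Module.End ℂ V) (Tpoly T) := Tpoly_rel T hT hvan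
  have har : a < n := by omega
  have hweak : ∀ (v : ℂ) (k : ℕ) (u : ℂ) (i j : Fin n), i ≤ j → (j : ℕ) < n - 1 →
      (i : ℕ) ≠ a - 1 →
      Tpoly T i j u (TTPoly T n a ha1 har le_rfl v k η)
        = ((if i = j then ν i else 0 : Polynomial ℂ).eval u) •
          TTPoly T n a ha1 har le_rfl v k η := by
    intro v k
    induction k with
    | zero =>
      intro u i j hij hj _
      change Tpoly T i j u η = _ • η
      by_cases h : i = j
      · subst h; simpa using hdiagν u i hj
      · simpa [h] using hsing u i j (lt_of_le_of_ne hij h) hj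
    | succ k ih =>
      exact YM.N_step_weak T hR (n - a) (idxSeq n a (n - a) (by omega))
        (idxSeq n (a - 1) (n - a) (by omega)) a ha1 (by omega) (fun _ => rfl) (fun _ => rfl)
        (v + (k : ℂ)) _ (fun i j => if i = j then ν i else 0)
        (fun i j h => if_neg h.ne)
        (fun i j h => by
          by_cases hij : i = j
          · subst hij; simp [hdeg i h]
          · simp [hij]) ih
  refine ⟨?_, ?_, ?_⟩
  · intro i hi1 hi2 hia u
    simpa using hweak v k u ⟨i - 1, by omega⟩ ⟨i - 1, by omega⟩ le_rfl
      (by simp only; omega) (by simp only; omega)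
  · intro i hi1 hi2 hia u
    have hne : (⟨i - 1, by omega⟩ : Fin n) ≠ ⟨i, by omega⟩ := by
      intro h; have := congrArg Fin.val h; simp only at this; omega
    have h := hweak v k u ⟨i - 1, by omega⟩ ⟨i, by omega⟩
      (by rw [Fin.le_def]; simp only; omega) (by simp only; omega) (by simp only; omega)
    rw [if_neg hne] at h
    simpa using h
  · intro ρ q _ hq
    have hlt : ((⟨a - 1, by omega⟩ : Fin n) : ℕ) < n - 1 := by simp only; omega
    have hqd : q.natDegree ≤ 1 := by
      have h1 := hdeg _ hlt
      have h2 := (hmonic _ hlt).ne_zero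
      rw [hq] at h1 h2
      rw [(Polynomial.monic_X_add_C ρ).natDegree_mul' (right_ne_zero_of_mul h2),
        Polynomial.natDegree_X_add_C] at h1
      omega
    have hstrong : ∀ k : ℕ,
        (∀ (u : ℂ) (l : Fin n), (⟨a - 1, by omega⟩ : Fin n) < l → (l : ℕ) < n - 1 →
          Tpoly T ⟨a - 1, by omega⟩ l u (TTPoly T n a ha1 har le_rfl (-ρ) k η) = 0) ∧
        (∀ u : ℂ, Tpoly T ⟨a - 1, by omega⟩ ⟨a - 1, by omega⟩ u
            (TTPoly T n a ha1 har le_rfl (-ρ) k η)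
          = ((u - (-ρ + (k : ℂ))) * q.eval u) • TTPoly T n a ha1 har le_rfl (-ρ) k η) := by
      intro k
      induction k with
      | zero =>
        refine ⟨fun u l hl hl' => hsing u _ l hl hl', fun u => ?_⟩
        change Tpoly T _ _ u η = _ • η
        rw [hdiagν u _ hlt, hq]
        simp
      | succ k ih =>
        obtain ⟨h1, h2⟩ := YM.N_step_strong T hR (n - a) (idxSeq n a (n - a) (by omega))
          (idxSeq n (a - 1) (n - a) (by omega)) a ha1 (by omega) (fun _ => rfl)
          (-ρ + (k : ℂ)) _ ⟨a - 1, by omega⟩ rfl q hqd ih.1 ih.2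
        refine ⟨h1, fun u => ?_⟩
        have h3 := h2 u hlt
        have e : -ρ + ((k + 1 : ℕ) : ℂ) = -ρ + (k : ℂ) + 1 := by push_cast; ring
        rw [e]
        exact h3
    refine ⟨fun u => ?_, fun ha3 u => ?_⟩
    · have h := (hstrong k).2 u
      have e : u - (-ρ + (k : ℂ)) = u + ρ - (k : ℂ) := by ring
      rw [e] at h
      exact h
    · exact (hstrong k).1 u ⟨a, by omega⟩ (by rw [Fin.lt_def]; simp only; omega) ha3
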